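/- Let μ be a Borel probability measure on Ω absolutely continuous with respect to d-dimensional Lebesgue measure, let ν be a Borel probability measure on Ω with μ(spt(ν)) = 0, let u0 be a Kantorovich potential and T0 an optimal transport map for W1(μ,ν), and let A = {y ∈ spt(ν) : α(y) > 0 and β(y) > 0}. If ν(A) = 0, then for μ-almost every x ∈ Ω one has α(x) = |x − T0(x)|. -/

import Mathlib

open MeasureTheory Set

noncomputable section

/-- The Wasserstein 1 distance between two Borel probability measures, defined as the
infimum of the transport cost over all couplings. -/
def W1 {d : ℕ} (μ ν : Measure (EuclideanSpace ℝ (Fin d))) : ℝ :=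
  sInf {c | ∃ γ : Measure (EuclideanSpace ℝ (Fin d) × EuclideanSpace ℝ (Fin d)),
    IsProbabilityMeasure γ ∧ γ.map Prod.fst = μ ∧ γ.map Prod.snd = ν ∧
    c = ∫ p, ‖p.1 - p.2‖ ∂γ}

/-- `u0` is a Kantorovich potential for `W1(μ, ν)`: it is 1-Lipschitz on Ω and achieves
the supremum in the dual problem. -/
def IsKantorovichPotential {d : ℕ} (Ω : Set (EuclideanSpace ℝ (Fin d)))
    (μ ν : Measure (EuclideanSpace ℝ (Fin d))) (u0 : EuclideanSpace ℝ (Fin d) → ℝ) : Prop :=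
  LipschitzOnWith 1 u0 Ω ∧
  ∀ u : EuclideanSpace ℝ (Fin d) → ℝ, LipschitzOnWith 1 u Ω →
    ∫ x, u x ∂μ - ∫ x, u x ∂ν ≤ ∫ x, u0 x ∂μ - ∫ x, u0 x ∂ν

/-- `T` is an optimal transport map for `W1(μ, ν)`: a Borel map from Ω to Ω pushing μ
forward to ν whose transport cost equals `W1 μ ν`. -/
def IsOptimalMap {d : ℕ} (Ω : Set (EuclideanSpace ℝ (Fin d)))
    (μ ν : Measure (EuclideanSpace ℝ (Fin d)))
    (T : EuclideanSpace ℝ (Fin d) → EuclideanSpace ℝ (Fin d)) : Prop :=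
  Measurable T ∧ MapsTo T Ω Ω ∧ μ.map T = ν ∧ ∫ x, ‖x - T x‖ ∂μ = W1 μ ν

/-- `rayLow Ω u0 x` (denoted α in the paper): the distance from `x` to the lower
endpoint of a transport ray through `x`. -/
def rayLow {d : ℕ} (Ω : Set (EuclideanSpace ℝ (Fin d)))
    (u0 : EuclideanSpace ℝ (Fin d) → ℝ) (x : EuclideanSpace ℝ (Fin d)) : ℝ :=
  sSup {r | ∃ z ∈ Ω, u0 x - u0 z = ‖x - z‖ ∧ r = ‖x - z‖}

/-- `rayHigh Ω u0 x` (denoted β in the paper): the distance from `x` to the upper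
endpoint of a transport ray through `x`. -/
def rayHigh {d : ℕ} (Ω : Set (EuclideanSpace ℝ (Fin d)))
    (u0 : EuclideanSpace ℝ (Fin d) → ℝ) (x : EuclideanSpace ℝ (Fin d)) : ℝ :=
  sSup {r | ∃ z ∈ Ω, u0 z - u0 x = ‖x - z‖ ∧ r = ‖x - z‖}

/-- The support of a Borel measure: the set of points all of whose open neighbourhoods
have positive measure (equivalently, the smallest closed set of full measure). -/
def mSupport {X : Type*} [TopologicalSpace X] [MeasurableSpace X] (μ : Measure X) : Set X :=
  {x | ∀ U : Set X, IsOpen U → x ∈ U → 0 < μ U}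

set_option linter.unusedSectionVars false

section KR
variable {X : Type*} [MetricSpace X] [CompactSpace X] [MeasurableSpace X] [BorelSpace X]

lemma kr_int (μ : Measure X) [IsProbabilityMeasure μ] {f : X → ℝ} (hf : Continuous f) :
    Integrable f μ := by
  exact hf.integrable_of_hasCompactSupport (HasCompactSupport.of_compactSpace f)

lemma kr_key (μ ν : Measure X) [IsProbabilityMeasure μ] [IsProbabilityMeasure ν] (B : ℝ)
    (hB : ∀ u : X → ℝ, LipschitzWith 1 u → ∫ x, u x ∂μ - ∫ x, u x ∂ν ≤ B)
    (φ ψ : X → ℝ) (hφ : Continuous φ) (hψ : Continuous ψ) (t : ℝ) (ht : 0 ≤ t) (m : ℝ)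
    (h : ∀ x y, m ≤ φ x + ψ y + t * dist x y) :
    m ≤ ∫ x, φ x ∂μ + ∫ x, ψ x ∂ν + t * B := by
  have hne : Nonempty X := μ.nonempty_of_neZero
  have hbdd : ∀ x, BddBelow (range fun y => t * dist x y + ψ y) := by
    intro x
    refine ⟨m - φ x, ?_⟩
    rintro _ ⟨y, rfl⟩
    have := h x y
    simp only
    linarith
  set u : X → ℝ := fun x => ⨅ y, (t * dist x y + ψ y) with hu
  have hu1 : ∀ x, u x ≤ ψ x := fun x => by
    have := ciInf_le (hbdd x) x
    simpa using this
  have hu2 : ∀ x, m - φ x ≤ u x := fun x => by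
    refine le_ciInf fun y => ?_
    have := h x y
    linarith
  have hu3 : ∀ x y, u x ≤ u y + t * dist x y := fun x y => by
    have : u x - t * dist x y ≤ u y := by
      refine le_ciInf fun z => ?_
      have h1 := ciInf_le (hbdd x) z
      have h2 : t * dist x z ≤ t * (dist x y + dist y z) :=
        mul_le_mul_of_nonneg_left (dist_triangle _ _ _) ht
      change (⨅ y, (t * dist x y + ψ y)) - _ ≤ _
      linarith
    linarith
  have huc : Continuous u := by
    have : LipschitzWith (Real.toNNReal t) u := LipschitzWith.of_le_add_mul _ (by
      intro x y; rw [Real.coe_toNNReal _ ht]; exact hu3 x y)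
    exact this.continuous
  have hmain : ∫ x, u x ∂μ - ∫ x, u x ∂ν ≤ t * B := by
    rcases ht.eq_or_lt with h0 | h0
    · have : ∀ x, u x = ⨅ y, ψ y := by intro x; simp [hu, ← h0]
      simp [this, ← h0]
    · have h1 := hB (fun x => t⁻¹ * u x) (LipschitzWith.of_le_add fun x y => by
        have := hu3 x y
        calc t⁻¹ * u x ≤ t⁻¹ * (u y + t * dist x y) := by gcongr
          _ = _ := by field_simp)
      rw [integral_const_mul, integral_const_mul, ← mul_sub] at h1
      rwa [inv_mul_le_iff₀ h0] at h1
  have i1 : ∫ x, (m - φ x) ∂μ ≤ ∫ x, u x ∂μ :=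
    integral_mono (kr_int μ (by fun_prop)) (kr_int μ huc) hu2
  have i2 : ∫ x, u x ∂ν ≤ ∫ x, ψ x ∂ν :=
    integral_mono (kr_int ν huc) (kr_int ν hψ) hu1
  rw [integral_sub (integrable_const _) (kr_int μ hφ)] at i1
  simp at i1
  linarith

open CompactlySupported

def krS (μ ν : Measure X) (B : ℝ) (f : C_c(X × X, ℝ)) : Set ℝ :=
  {r | ∃ φ ψ : X → ℝ, ∃ t : ℝ, Continuous φ ∧ Continuous ψ ∧ 0 ≤ t ∧
    (∀ x y, f (x, y) ≤ φ x + ψ y + t * dist x y) ∧ r = ∫ x, φ x ∂μ + ∫ x, ψ x ∂ν + t * B}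

lemma kr_bound (f : C_c(X × X, ℝ)) : ∃ C, ∀ p, |f p| ≤ C := by
  obtain ⟨C, hC⟩ := (isCompact_univ (X := X × X)).exists_bound_of_continuousOn
    (f := f) f.continuous.continuousOn
  exact ⟨C, fun p => hC p trivial⟩

theorem kr_exists (μ ν : Measure X) [IsProbabilityMeasure μ] [IsProbabilityMeasure ν] (B : ℝ)
    (hB : ∀ u : X → ℝ, LipschitzWith 1 u → ∫ x, u x ∂μ - ∫ x, u x ∂ν ≤ B) :
    ∃ γ : Measure (X × X), IsProbabilityMeasure γ ∧ γ.map Prod.fst = μ ∧ γ.map Prod.snd = ν ∧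
      ∫ p, dist p.1 p.2 ∂γ ≤ B := by
  have hne : ∀ f, (krS μ ν B f).Nonempty := fun f => by
    obtain ⟨C, hC⟩ := kr_bound f
    exact ⟨_, fun _ => C, fun _ => 0, 0, continuous_const, continuous_const, le_rfl,
      fun x y => by have := (abs_le.1 (hC (x, y))).2; simpa using this, rfl⟩
  have hbd : ∀ f, BddBelow (krS μ ν B f) := fun f => by
    obtain ⟨C, hC⟩ := kr_bound f
    refine ⟨-C, ?_⟩
    rintro _ ⟨φ, ψ, t, h1, h2, h3, h4, rfl⟩
    exact kr_key μ ν B hB φ ψ h1 h2 t h3 _ fun x y =>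
      (abs_le.1 (hC (x, y))).1.trans (h4 x y)
  set N : C_c(X × X, ℝ) → ℝ := fun f => sInf (krS μ ν B f) with hN
  have hle : ∀ (f : C_c(X × X, ℝ)) (φ ψ : X → ℝ) (t : ℝ), Continuous φ → Continuous ψ → 0 ≤ t →
      (∀ x y, f (x, y) ≤ φ x + ψ y + t * dist x y) →
      N f ≤ ∫ x, φ x ∂μ + ∫ x, ψ x ∂ν + t * B := fun f φ ψ t h1 h2 h3 h4 =>
    csInf_le (hbd f) ⟨φ, ψ, t, h1, h2, h3, h4, rfl⟩
  have hhom' : ∀ c : ℝ, 0 < c → ∀ f, N (c • f) ≤ c * N f := by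
    intro c hc f
    rw [← inv_mul_le_iff₀ hc]
    refine le_csInf (hne f) ?_
    rintro _ ⟨φ, ψ, t, h1, h2, h3, h4, rfl⟩
    rw [inv_mul_le_iff₀ hc]
    refine (hle (c • f) (fun x => c * φ x) (fun x => c * ψ x) (c * t) (by fun_prop) (by fun_prop)
      (by positivity) fun x y => ?_).trans_eq ?_
    · have := mul_le_mul_of_nonneg_left (h4 x y) hc.le
      simp only [CompactlySupportedContinuousMap.smul_apply, smul_eq_mul]
      linarith
    · rw [integral_const_mul, integral_const_mul]; ring
  have hhom : ∀ c : ℝ, 0 < c → ∀ f, N (c • f) = c * N f := by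
    intro c hc f
    refine le_antisymm (hhom' c hc f) ?_
    have := hhom' c⁻¹ (by positivity) (c • f)
    rw [smul_smul, inv_mul_cancel₀ hc.ne', one_smul] at this
    rwa [le_inv_mul_iff₀ hc] at this
  have hadd : ∀ f g, N (f + g) ≤ N f + N g := by
    intro f g
    rw [← sub_le_iff_le_add]
    refine le_csInf (hne f) ?_
    rintro _ ⟨φ, ψ, t, h1, h2, h3, h4, rfl⟩
    rw [sub_le_iff_le_add, ← sub_le_iff_le_add']
    refine le_csInf (hne g) ?_
    rintro _ ⟨φ', ψ', t', h1', h2', h3', h4', rfl⟩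
    rw [sub_le_iff_le_add']
    refine (hle (f + g) (fun x => φ x + φ' x) (fun x => ψ x + ψ' x) (t + t') (by fun_prop)
      (by fun_prop) (by positivity) fun x y => ?_).trans_eq ?_
    · have := h4 x y
      have := h4' x y
      simp only [CompactlySupportedContinuousMap.add_apply]
      linarith
    · rw [integral_add (kr_int μ h1) (kr_int μ h1'), integral_add (kr_int ν h2) (kr_int ν h2')]
      ring
  obtain ⟨g, -, hg⟩ := exists_extension_of_le_sublinear (E := C_c(X × X, ℝ))
    ⟨⊥, 0⟩ N hhom hadd (by
      rintro ⟨x, hx⟩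
      have hx : x = 0 := hx
      subst hx
      have := hhom 2 (by norm_num) 0
      rw [smul_zero] at this
      change (0 : ℝ) ≤ N 0
      linarith)
  have hpos : ∀ f, 0 ≤ f → 0 ≤ g f := by
    intro f hf
    have h1 := (hg (-f)).trans (hle (-f) (fun _ => 0) (fun _ => 0) 0 continuous_const
      continuous_const le_rfl fun x y => by
        have : 0 ≤ f (x, y) := hf (x, y)
        simpa using this)
    simp at h1
    exact h1
  let Λ : C_c(X × X, ℝ) →ₚ[ℝ] ℝ := PositiveLinearMap.mk₀ g hpos
  let γ := RealRMK.rieszMeasure Λ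
  have hγ : ∀ f : C_c(X × X, ℝ), ∫ p, f p ∂γ = g f := fun f => RealRMK.integral_rieszMeasure Λ f
  have hγf : IsFiniteMeasure γ := inferInstance
  have hγ' : ∀ (f : X × X → ℝ) (φ ψ : X → ℝ) (t : ℝ), Continuous f →
      Continuous φ → Continuous ψ → 0 ≤ t →
      (∀ x y, f (x, y) ≤ φ x + ψ y + t * dist x y) →
      ∫ p, f p ∂γ ≤ ∫ x, φ x ∂μ + ∫ x, ψ x ∂ν + t * B := by
    intro f φ ψ t hf h1 h2 h3 h4
    let F : C_c(X × X, ℝ) := ⟨⟨f, hf⟩, HasCompactSupport.of_compactSpace f⟩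
    exact (hγ F).trans_le ((hg F).trans (hle F φ ψ t h1 h2 h3 h4))
  have e1 : γ.map Prod.fst = μ := by
    refine ext_of_forall_integral_eq_of_IsFiniteMeasure fun φ => ?_
    rw [integral_map (by fun_prop) (by fun_prop)]
    have a := hγ' (fun p => φ p.1) φ (fun _ => 0) 0 (by fun_prop) (by fun_prop) (by fun_prop)
      le_rfl (by simp)
    have b := hγ' (fun p => - φ p.1) (fun x => - φ x) (fun _ => 0) 0 (by fun_prop) (by fun_prop)
      (by fun_prop) le_rfl (by simp)
    simp [integral_neg] at a b
    linarith
  have e2 : γ.map Prod.snd = ν := by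
    refine ext_of_forall_integral_eq_of_IsFiniteMeasure fun φ => ?_
    rw [integral_map (by fun_prop) (by fun_prop)]
    have a := hγ' (fun p => φ p.2) (fun _ => 0) φ 0 (by fun_prop) (by fun_prop) (by fun_prop)
      le_rfl (by simp)
    have b := hγ' (fun p => - φ p.2) (fun _ => 0) (fun x => - φ x) 0 (by fun_prop) (by fun_prop)
      (by fun_prop) le_rfl (by simp)
    simp [integral_neg] at a b
    linarith
  refine ⟨γ, ⟨?_⟩, e1, e2, ?_⟩
  · have : (γ.map Prod.fst) univ = 1 := by rw [e1]; simp
    rwa [Measure.map_apply measurable_fst MeasurableSet.univ] at this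
  · have a := hγ' (fun p => dist p.1 p.2) (fun _ => 0) (fun _ => 0) 1 (by fun_prop) (by fun_prop)
      (by fun_prop) zero_le_one (by simp)
    simpa using a

end KR

lemma ray_deriv {E : Type*} [NormedAddCommGroup E] [NormedSpace ℝ E] {u : E → ℝ}
    (hu : LipschitzWith 1 u) {x y : E} (hd : DifferentiableAt ℝ u x)
    (h : u x - u y = ‖x - y‖) : fderiv ℝ u x (y - x) = -‖y - x‖ := by
  have hL : ∀ a b, u a - u b ≤ ‖a - b‖ := fun a b => by
    have := (le_abs_self _).trans (hu.dist_le_mul a b)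
    simpa [dist_eq_norm] using this
  have h1 : HasDerivAt (fun t : ℝ => u (x + t • (y - x))) (fderiv ℝ u x (y - x)) 0 := by
    have h2 : HasDerivAt (fun t : ℝ => x + t • (y - x)) (y - x) 0 := by
      simpa using ((hasDerivAt_id (0 : ℝ)).smul_const (y - x)).const_add x
    have h3 : HasFDerivAt u (fderiv ℝ u x) (x + (0 : ℝ) • (y - x)) := by
      simpa using hd.hasFDerivAt
    exact h3.comp_hasDerivAt (0 : ℝ) h2
  have h2 : HasDerivWithinAt (fun t : ℝ => u (x + t • (y - x))) (-‖y - x‖) (Icc 0 1) 0 := by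
    have h3 : HasDerivWithinAt (fun t : ℝ => u x + t * (-‖y - x‖)) (-‖y - x‖) (Icc 0 1) 0 := by
      have := ((hasDerivAt_id (0 : ℝ)).mul_const (-‖y - x‖)).const_add (u x)
      simpa using this.hasDerivWithinAt
    refine h3.congr_of_mem (fun t ht => ?_) (by simp)
    have a := hL x (x + t • (y - x))
    have b := hL (x + t • (y - x)) y
    have e1 : x - (x + t • (y - x)) = t • (x - y) := by module
    have e2 : x + t • (y - x) - y = (1 - t) • (x - y) := by module
    rw [e1, norm_smul, Real.norm_of_nonneg ht.1] at a
    rw [e2, norm_smul, Real.norm_of_nonneg (by linarith [ht.2])] at b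
    rw [norm_sub_rev y x]
    linarith
  exact (uniqueDiffOn_Icc zero_lt_one 0 (by simp)).eq_deriv _ h1.hasDerivWithinAt h2

lemma ray_unique {E : Type*} [NormedAddCommGroup E] [NormedSpace ℝ E] [StrictConvexSpace ℝ E]
    {u : E → ℝ}
    (hu : LipschitzWith 1 u) {x y z : E} (hd : DifferentiableAt ℝ u x)
    (hy : u x - u y = ‖x - y‖) (hz : u x - u z = ‖x - z‖) (hlt : ‖x - y‖ < ‖x - z‖) :
    u y - u z = ‖y - z‖ ∧ 0 < ‖y - z‖ := by
  have a := ray_deriv hu hd hy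
  have b := ray_deriv hu hd hz
  have hn : ‖fderiv ℝ u x‖ ≤ 1 := by simpa using norm_fderiv_le_of_lipschitz ℝ hu (x₀ := x)
  have hs : SameRay ℝ (y - x) (z - x) := by
    rw [sameRay_iff_norm_add]
    refine le_antisymm (norm_add_le _ _) ?_
    have h1 := (fderiv ℝ u x).le_of_opNorm_le hn ((y - x) + (z - x))
    rw [map_add, a, b, Real.norm_eq_abs] at h1
    have := neg_abs_le (-‖y - x‖ + -‖z - x‖)
    linarith
  have h2 := hs.norm_sub
  rw [sub_sub_sub_cancel_right, norm_sub_rev y x, norm_sub_rev z x,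
    abs_of_nonpos (by linarith)] at h2
  rw [h2]
  constructor <;> linarith

lemma W1_le {d : ℕ} (Ω : Set (EuclideanSpace ℝ (Fin d))) (hΩc : IsCompact Ω)
    (μ ν : Measure (EuclideanSpace ℝ (Fin d)))
    [IsProbabilityMeasure μ] [IsProbabilityMeasure ν]
    (hμΩ : μ Ωᶜ = 0) (hνΩ : ν Ωᶜ = 0)
    (u0 : EuclideanSpace ℝ (Fin d) → ℝ) (hu0 : IsKantorovichPotential Ω μ ν u0) :
    W1 μ ν ≤ ∫ x, u0 x ∂μ - ∫ x, u0 x ∂ν := by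
  have hm : MeasurableSet Ω := hΩc.isClosed.measurableSet
  have hemb : MeasurableEmbedding (Subtype.val : Ω → EuclideanSpace ℝ (Fin d)) :=
    MeasurableEmbedding.subtype_coe hm
  have : CompactSpace Ω := isCompact_iff_compactSpace.1 hΩc
  have hmap : ∀ ρ : Measure (EuclideanSpace ℝ (Fin d)), ρ Ωᶜ = 0 →
      (ρ.comap (Subtype.val : Ω → _)).map Subtype.val = ρ := by
    intro ρ h
    rw [hemb.map_comap, Subtype.range_coe]
    exact Measure.restrict_eq_self_of_ae_mem h
  have hprob : ∀ ρ : Measure (EuclideanSpace ℝ (Fin d)), IsProbabilityMeasure ρ → ρ Ωᶜ = 0 →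
      IsProbabilityMeasure (ρ.comap (Subtype.val : Ω → _)) := by
    intro ρ hρ h
    refine ⟨?_⟩
    have h1 : ((ρ.comap (Subtype.val : Ω → _)).map Subtype.val) univ = 1 := by
      rw [hmap ρ h]; exact measure_univ
    rwa [hemb.map_apply] at h1
  have := hprob μ inferInstance hμΩ
  have := hprob ν inferInstance hνΩ
  obtain ⟨γ, h1, h2, h3, h4⟩ := kr_exists (μ.comap (Subtype.val : Ω → _))
    (ν.comap (Subtype.val : Ω → _)) (∫ x, u0 x ∂μ - ∫ x, u0 x ∂ν) (by
      intro v hv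
      classical
      let w : EuclideanSpace ℝ (Fin d) → ℝ := fun x => if h : x ∈ Ω then v ⟨x, h⟩ else 0
      have hw : ∀ x : Ω, w x = v x := fun x => by simp [w]
      have hwL : LipschitzOnWith 1 w Ω := by
        rw [lipschitzOnWith_iff_restrict]
        have : Ω.domRestrict w = v := funext hw
        rwa [this]
      have hI : ∀ ρ : Measure (EuclideanSpace ℝ (Fin d)), ρ Ωᶜ = 0 →
          ∫ x, v x ∂(ρ.comap (Subtype.val : Ω → _)) = ∫ x, w x ∂ρ := by
        intro ρ h
        conv_rhs => rw [← hmap ρ h]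
        rw [hemb.integral_map]
        simp [hw]
      rw [hI μ hμΩ, hI ν hνΩ]
      exact hu0.2 w hwL)
  refine le_trans (csInf_le ⟨0, ?_⟩ ⟨γ.map (Prod.map Subtype.val Subtype.val), ?_, ?_, ?_, rfl⟩) ?_
  · rintro _ ⟨γ, -, -, -, rfl⟩
    positivity
  · exact Measure.isProbabilityMeasure_map (by fun_prop)
  · rw [Measure.map_map (by fun_prop) (by fun_prop)]
    conv_rhs => rw [← hmap μ hμΩ, ← h2, Measure.map_map (by fun_prop) (by fun_prop)]
    rfl
  · rw [Measure.map_map (by fun_prop) (by fun_prop)]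
    conv_rhs => rw [← hmap ν hνΩ, ← h3, Measure.map_map (by fun_prop) (by fun_prop)]
    rfl
  · rw [(hemb.prodMap hemb).integral_map]
    simpa [Subtype.dist_eq, dist_eq_norm] using h4

lemma ray_bdd {E : Type*} [NormedAddCommGroup E] {Ω : Set E} (hΩc : IsCompact Ω) (x : E)
    (P : E → Prop) : BddAbove {r | ∃ z ∈ Ω, P z ∧ r = ‖x - z‖} := by
  obtain ⟨C, hC⟩ := hΩc.exists_bound_of_continuousOn (f := fun z => x - z) (by fun_prop)
  refine ⟨C, ?_⟩
  rintro _ ⟨z, hz, -, rfl⟩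
  exact hC z hz

theorem stmt8 {d : ℕ} (hd : 1 ≤ d) (Ω : Set (EuclideanSpace ℝ (Fin d)))
    (hΩc : IsCompact Ω) (hΩv : Convex ℝ Ω)
    (μ ν : Measure (EuclideanSpace ℝ (Fin d)))
    [IsProbabilityMeasure μ] [IsProbabilityMeasure ν]
    (hμΩ : μ Ωᶜ = 0) (hνΩ : ν Ωᶜ = 0) (hac : μ ≪ volume)
    (hμspt : μ (mSupport ν) = 0)
    (u0 : EuclideanSpace ℝ (Fin d) → ℝ) (hu0 : IsKantorovichPotential Ω μ ν u0)
    (T0 : EuclideanSpace ℝ (Fin d) → EuclideanSpace ℝ (Fin d))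
    (hT0 : IsOptimalMap Ω μ ν T0)
    (hA : ν {y | y ∈ mSupport ν ∧ 0 < rayLow Ω u0 y ∧ 0 < rayHigh Ω u0 y} = 0) :
    ∀ᵐ x ∂μ, rayLow Ω u0 x = ‖x - T0 x‖ := by
  obtain ⟨hTm, hTΩ, hTν, hTW⟩ := hT0
  have hW := W1_le Ω hΩc μ ν hμΩ hνΩ u0 hu0
  obtain ⟨u, huL, hue⟩ := hu0.1.extend_real
  have haeμ : ∀ᵐ x ∂μ, x ∈ Ω := hμΩ
  have haeν : ∀ᵐ x ∂ν, x ∈ Ω := hνΩ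
  have hL : ∀ a b, u a - u b ≤ ‖a - b‖ := fun a b => by
    have := (le_abs_self _).trans (huL.dist_le_mul a b)
    simpa [dist_eq_norm] using this
  obtain ⟨C, hC⟩ := hΩc.exists_bound_of_continuousOn (f := u) huL.continuous.continuousOn
  obtain ⟨D, hD⟩ := hΩc.exists_bound_of_continuousOn
    (f := fun z : EuclideanSpace ℝ (Fin d) => z) (by fun_prop)
  have huc := huL.continuous
  have iμ : Integrable u μ := Integrable.of_bound (by fun_prop) C
    (haeμ.mono fun x hx => hC x hx)
  have iT : Integrable (fun x => u (T0 x)) μ := Integrable.of_bound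
    (huc.measurable.comp hTm).aestronglyMeasurable C
    (haeμ.mono fun x hx => hC _ (hTΩ hx))
  have iD : Integrable (fun x => ‖x - T0 x‖) μ := Integrable.of_bound
    (measurable_id.sub hTm).norm.aestronglyMeasurable (D + D)
    (haeμ.mono fun x hx => by
      rw [norm_norm]
      exact (norm_sub_le _ _).trans (add_le_add (hD _ hx) (hD _ (hTΩ hx))))
  have e1 : ∫ x, u0 x ∂μ = ∫ x, u x ∂μ := integral_congr_ae (haeμ.mono fun x hx => hue hx)
  have e2 : ∫ x, u0 x ∂ν = ∫ x, u (T0 x) ∂μ := by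
    rw [integral_congr_ae (haeν.mono fun x hx => hue hx), ← hTν,
      integral_map hTm.aemeasurable (by fun_prop)]
  have hzero : ∫ x, (‖x - T0 x‖ - (u x - u (T0 x))) ∂μ = 0 := by
    refine le_antisymm ?_ (integral_nonneg fun x => sub_nonneg.2 (hL _ _))
    have iS : Integrable (fun x => u x - u (T0 x)) μ := iμ.sub iT
    rw [integral_sub iD iS, integral_sub iμ iT, hTW, ← e1, ← e2]
    linarith
  rw [integral_eq_zero_iff_of_nonneg (fun x => sub_nonneg.2 (hL _ _)) (iD.sub (iμ.sub iT))] at hzero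
  have hsupp : ∀ᵐ y ∂ν, y ∈ mSupport ν := by
    have h : ν.support ⊆ mSupport ν := by
      intro y hy U hU hyU
      rw [Measure.mem_support_iff_forall] at hy
      exact hy U (hU.mem_nhds hyU)
    exact Filter.mem_of_superset Measure.support_mem_ae h
  have hA' : ∀ᵐ y ∂ν, ¬ (y ∈ mSupport ν ∧ 0 < rayLow Ω u0 y ∧ 0 < rayHigh Ω u0 y) := by
    rw [ae_iff]; simpa using hA
  have hns : ∀ᵐ x ∂μ, x ∉ mSupport ν := by
    rw [ae_iff]; simpa using hμspt
  have hdiff : ∀ᵐ x ∂μ, DifferentiableAt ℝ u x := hac.ae_le huL.ae_differentiableAt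
  rw [← hTν] at hsupp hA'
  have hsupp := ae_of_ae_map hTm.aemeasurable hsupp
  have hA' := ae_of_ae_map hTm.aemeasurable hA'
  rw [hTν] at hsupp hA'
  filter_upwards [haeμ, hzero, hsupp, hA', hns, hdiff] with x hx hz hs hA hn hd
  have hTx := hTΩ hx
  have hz : u x - u (T0 x) = ‖x - T0 x‖ := by
    have : ‖x - T0 x‖ - (u x - u (T0 x)) = 0 := hz
    linarith
  have hne : 0 < ‖x - T0 x‖ := by
    rw [norm_pos_iff, sub_ne_zero]
    intro h
    rw [← h] at hs
    exact hn hs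
  have hmem : ‖x - T0 x‖ ∈ {r | ∃ z ∈ Ω, u0 x - u0 z = ‖x - z‖ ∧ r = ‖x - z‖} :=
    ⟨T0 x, hTx, by rw [hue hx, hue hTx, hz], rfl⟩
  refine le_antisymm (csSup_le ⟨_, hmem⟩ ?_) (le_csSup (ray_bdd hΩc x _) hmem)
  rintro _ ⟨z, hzΩ, hzu, rfl⟩
  by_contra! hlt
  rw [hue hx, hue hzΩ] at hzu
  obtain ⟨q1, q2⟩ := ray_unique huL hd hz hzu hlt
  refine hA ⟨hs, ?_, ?_⟩
  · exact q2.trans_le (le_csSup (ray_bdd hΩc (T0 x) _)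
      ⟨z, hzΩ, by rw [hue hTx, hue hzΩ, q1], rfl⟩)
  · rw [norm_sub_rev] at hne hz
    exact hne.trans_le (le_csSup (ray_bdd hΩc (T0 x) _)
      ⟨x, hx, by rw [hue hTx, hue hx, hz], rfl⟩)
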